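/- Let G be a connected graph of order m ≥ 3 and let n ≥ 1 with m ≡ n (mod 2), and suppose χ(G) = χ_la(G). If n ≥ m, then χ_la(G ∨ O_n) = χ_la(G) + 1. -/

import Mathlib

open scoped BigOperators

/-- The induced vertex sum: sum of labels of edges incident to `v`. -/
noncomputable def vertexSum {V : Type*} (G : SimpleGraph V) (f : Sym2 V → ℕ) (v : V) : ℕ :=
  ∑ᶠ e ∈ G.incidenceSet v, f e

/-- `f` is a local antimagic labeling of `G`: a bijection from the edge set onto
`{1, …, |E(G)|}` such that adjacent vertices get distinct induced sums. -/
def IsLocalAntimagic {V : Type*} (G : SimpleGraph V) (f : Sym2 V → ℕ) : Prop :=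
  Set.BijOn f G.edgeSet (Set.Icc 1 G.edgeSet.ncard) ∧
  ∀ u v, G.Adj u v → vertexSum G f u ≠ vertexSum G f v

/-- Number of distinct induced vertex labels of the labeling `f`. -/
noncomputable def colorCount {V : Type*} (G : SimpleGraph V) (f : Sym2 V → ℕ) : ℕ :=
  (Set.range (vertexSum G f)).ncard

/-- The local antimagic chromatic number. -/
noncomputable def chiLA {V : Type*} (G : SimpleGraph V) : ℕ :=
  sInf { n | ∃ f, IsLocalAntimagic G f ∧ colorCount G f = n }

/-- The join `G ∨ Oₙ` of `G` with the empty graph on `n` vertices. -/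
def joinEmpty {V : Type*} (G : SimpleGraph V) (n : ℕ) : SimpleGraph (V ⊕ Fin n) :=
  SimpleGraph.fromRel (fun x y =>
    (∃ a b, x = Sum.inl a ∧ y = Sum.inl b ∧ G.Adj a b) ∨ (x.isLeft ∧ y.isRight))

/-!
Label the edges of `G` optimally, and the edge from the vertex `a` of `G` to the new vertex `j` by
`|E(G)| + L a j`, where `L` is a magic rectangle. This shifts all vertex sums of `G` by one
constant and gives all new vertices one common, smaller sum, as `m = |V(G)| ≤ n`. Conversely,
the vertex sums of a local antimagic labeling of the join colour `G` without using the sum of a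
new vertex, so there are at least `χ(G) + 1` of them.

Doubling and recentering `1, …, mn` at `0` turns a magic rectangle into an array that has zero
line sums and consists of the integers `± x` with `x < mn` and `x` of the other parity than `mn`.
By counting, it is enough that each of these integers occurs, so zero-sum arrays that cover parts
of the values can be glued together along rows and columns.
-/

/-- `HasZeroSumArray m n S`: some `m × n` integer array with all row and column sums zero contains
both `x` and `-x` for every `x ∈ S`. Entries may repeat, so that arrays can be concatenated
without any disjointness condition; when the values `± x` are `m * n` in number, each of them
occurs exactly once. -/
def HasZeroSumArray (m n : ℕ) (S : Set ℕ) : Prop :=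
  ∃ M : Matrix (Fin m) (Fin n) ℤ, (∀ i, ∑ j, M i j = 0) ∧ (∀ j, ∑ i, M i j = 0) ∧
    ∀ x ∈ S, (∃ i j, M i j = x) ∧ ∃ i j, M i j = -x

/-- The arithmetic progression `c, c + s, …` of length `l`. -/
def progression (c s l : ℕ) : Set ℕ := {x | ∃ t < l, x = c + s * t}

/-- The values `a`, `b`, `a + b` for the pairs `(a, b)` of a list. -/
def tripleValues (T : List (ℕ × ℕ)) : Set ℕ :=
  {x | ∃ p ∈ T, x = p.1 ∨ x = p.2 ∨ x = p.1 + p.2}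

theorem progression_add_subset (c s a b : ℕ) :
    progression c s (a + b) ⊆ progression c s a ∪ progression (c + s * a) s b := by
  rintro _ ⟨t, ht, rfl⟩
  rcases lt_or_ge t a with h | h
  · exact Or.inl ⟨t, h, rfl⟩
  · obtain ⟨t, rfl⟩ := Nat.exists_eq_add_of_le h
    exact Or.inr ⟨t, by omega, by ring⟩

theorem tripleValues_append (T T' : List (ℕ × ℕ)) :
    tripleValues (T ++ T') = tripleValues T ∪ tripleValues T' := by
  ext x
  simp only [tripleValues, List.mem_append, or_and_right, exists_or, Set.mem_ofPred_eq,
    Set.mem_union]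

namespace HasZeroSumArray

variable {m m' n n' : ℕ} {S S' : Set ℕ}

theorem transpose (h : HasZeroSumArray m n S) : HasZeroSumArray n m S := by
  obtain ⟨M, hrow, hcol, hS⟩ := h
  refine ⟨M.transpose, hcol, hrow, fun x hx => ?_⟩
  obtain ⟨⟨i, j, hij⟩, i', j', hij'⟩ := hS x hx
  exact ⟨⟨j, i, hij⟩, j', i', hij'⟩

theorem mono (h : HasZeroSumArray m n S) (hS : S' ⊆ S) : HasZeroSumArray m n S' := by
  obtain ⟨M, hrow, hcol, hM⟩ := h
  exact ⟨M, hrow, hcol, fun x hx => hM x (hS hx)⟩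

theorem hcat (h : HasZeroSumArray m n S) (h' : HasZeroSumArray m n' S') :
    HasZeroSumArray m (n + n') (S ∪ S') := by
  obtain ⟨M, hrow, hcol, hS⟩ := h
  obtain ⟨M', hrow', hcol', hS'⟩ := h'
  refine ⟨fun i => Fin.append (M i) (M' i), fun i => ?_, fun j => ?_, ?_⟩
  · simp [Fin.sum_univ_add, hrow, hrow']
  · induction j using Fin.addCases <;> simp [hcol, hcol']
  · rintro x (hx | hx)
    · obtain ⟨⟨i, j, hij⟩, i', j', hij'⟩ := hS x hx
      exact ⟨⟨i, j.castAdd n', by simpa⟩, i', j'.castAdd n', by simpa⟩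
    · obtain ⟨⟨i, j, hij⟩, i', j', hij'⟩ := hS' x hx
      exact ⟨⟨i, j.natAdd n, by simpa⟩, i', j'.natAdd n, by simpa⟩

theorem vcat (h : HasZeroSumArray m n S) (h' : HasZeroSumArray m' n S') :
    HasZeroSumArray (m + m') n (S ∪ S') :=
  (h.transpose.hcat h'.transpose).transpose

theorem image_mul (h : HasZeroSumArray m n S) (c : ℕ) :
    HasZeroSumArray m n ((c * ·) '' S) := by
  obtain ⟨M, hrow, hcol, hS⟩ := h
  refine ⟨(c : ℤ) • M, fun i => ?_, fun j => ?_, ?_⟩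
  · simp [← Finset.mul_sum, hrow]
  · simp [← Finset.mul_sum, hcol]
  · rintro _ ⟨x, hx, rfl⟩
    obtain ⟨⟨i, j, hij⟩, i', j', hij'⟩ := hS x hx
    exact ⟨⟨i, j, by simp [hij]⟩, i', j', by simp [hij']⟩

theorem zero_right (m : ℕ) : HasZeroSumArray m 0 ∅ :=
  ⟨0, by simp, by simp, by simp⟩

theorem two_four (c s : ℕ) : HasZeroSumArray 2 4 (progression c s 4) := by
  refine ⟨!![(c : ℤ), -(c + s), -(c + 2 * s), c + 3 * s;
    -c, c + s, c + 2 * s, -(c + 3 * s)], ?_, ?_, ?_⟩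
  · simp [Fin.forall_fin_succ, Fin.sum_univ_succ]
    grind
  · simp [Fin.forall_fin_succ]
  · rintro _ ⟨t, ht, rfl⟩
    interval_cases t <;> simp [Fin.exists_fin_succ, mul_comm]

theorem three_two (a b : ℕ) : HasZeroSumArray 3 2 (tripleValues [(a, b)]) := by
  refine ⟨!![(a : ℤ), -a; b, -b; -(a + b), a + b], ?_, ?_, ?_⟩
  · simp [Fin.forall_fin_succ]
  · simp [Fin.forall_fin_succ, Fin.sum_univ_succ]
  · simp [tripleValues, Fin.exists_fin_succ]

theorem three_three (a b : ℕ) :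
    HasZeroSumArray 3 3 (tripleValues [(0, 2 * a + b), (a, b)]) := by
  refine ⟨!![(a + b : ℤ), -(2 * a + b), a; -b, 0, b; -a, 2 * a + b, -(a + b)], ?_, ?_, ?_⟩
  · simp [Fin.forall_fin_succ, Fin.sum_univ_succ]
    grind
  · simp [Fin.forall_fin_succ, Fin.sum_univ_succ]
  · simp [tripleValues, Fin.exists_fin_succ]
    grind

theorem three_seven (y : ℕ) :
    HasZeroSumArray 3 7 (tripleValues [(0, y + 3), (2, y + 2), (4, y + 1), (6, y)]) := by
  refine ⟨!![2, -(y + 2 : ℤ), 4, -(y + 1), y, -6, y + 3;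
      y + 2, -2, y + 1, -4, 6, -y, -(y + 3);
      -(y + 4), y + 4, -(y + 5), y + 5, -(y + 6), y + 6, 0], ?_, ?_, ?_⟩
  · simp [Fin.forall_fin_succ, Fin.sum_univ_succ]
    grind
  · simp [Fin.forall_fin_succ, Fin.sum_univ_succ]
    grind
  · simp [tripleValues, Fin.exists_fin_succ]
    grind

theorem three_five : HasZeroSumArray 3 5 (Set.Iio 8) := by
  refine ⟨!![-7, -5, 5, 4, 3; 0, -1, -2, 2, 1; 7, 6, -3, -6, -4], by decide, by decide, ?_⟩
  intro x (hx : x < 8)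
  interval_cases x <;> simp [Fin.exists_fin_succ]

theorem two_six : HasZeroSumArray 2 6 (progression 1 2 6) := by
  refine ⟨!![1, 3, 5, 9, -7, -11; -1, -3, -5, -9, 7, 11], by decide, by decide, ?_⟩
  rintro _ ⟨t, ht, rfl⟩
  interval_cases t <;> simp [Fin.exists_fin_succ]

theorem two_five (a b : ℕ) : HasZeroSumArray 2 5 {2, a, a + 1, b, b + 1} := by
  refine ⟨!![2, (a : ℤ), -(a + 1), b, -(b + 1); -2, -a, a + 1, -b, b + 1], ?_, ?_, ?_⟩
  · simp [Fin.forall_fin_succ, Fin.sum_univ_succ]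
    grind
  · simp [Fin.forall_fin_succ]
  · simp [Fin.exists_fin_succ]

theorem repeat_progression {s l : ℕ} (h : ∀ c, HasZeroSumArray m n (progression c s l))
    (r c : ℕ) : HasZeroSumArray m (n * r) (progression c s (l * r)) := by
  induction r with
  | zero => exact (zero_right m).mono (by simp [progression])
  | succ r ih => exact (ih.hcat (h _)).mono (progression_add_subset c s _ _)

theorem even_four (p q c s : ℕ) :
    HasZeroSumArray (2 * p) (4 * q) (progression c s (4 * q * p)) :=
  (repeat_progression (fun c => (repeat_progression (fun c => two_four c s) q c).transpose)
    p c).transpose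

theorem even_even {m n : ℕ} (hm : Even m) (hn : Even n) (h : 4 ∣ m ∨ 4 ∣ n) (c s : ℕ) :
    HasZeroSumArray m n (progression c s (m * n / 2)) := by
  rcases h with ⟨q, rfl⟩ | ⟨q, rfl⟩
  · obtain ⟨p, rfl⟩ := hn.two_dvd
    convert (even_four p q c s).transpose using 2
    rw [show 4 * q * (2 * p) = 4 * q * p * 2 by ring, Nat.mul_div_cancel _ two_pos]
  · obtain ⟨p, rfl⟩ := hm.two_dvd
    convert even_four p q c s using 2
    rw [show 2 * p * (4 * q) = 4 * q * p * 2 by ring, Nat.mul_div_cancel _ two_pos]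

theorem odd_of_even {m n : ℕ} (hm : Even m) (hn : Even n) (hm2 : 2 ≤ m) (hn3 : 3 ≤ n) :
    HasZeroSumArray m n (progression 1 2 (m * n / 2)) := by
  by_cases h : 4 ∣ m ∨ 4 ∣ n
  · exact even_even hm hn h 1 2
  obtain ⟨p, rfl⟩ : ∃ p, m = 2 + 4 * p := ⟨m / 4, by grind⟩
  obtain ⟨q, rfl⟩ : ∃ q, n = 6 + 4 * q := ⟨n / 4 - 1, by grind⟩
  have top := two_six.hcat (even_even even_two ((by decide : Even 4).mul_right q)
    (Or.inr (dvd_mul_right 4 q)) (1 + 2 * 6) 2)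
  have bottom := even_even ((by decide : Even 4).mul_right p) hn (Or.inl (dvd_mul_right 4 p))
    (1 + 2 * (6 + 2 * (4 * q) / 2)) 2
  refine (top.vcat bottom).mono ?_
  rw [show (2 + 4 * p) * (6 + 4 * q) / 2 =
    6 + 2 * (4 * q) / 2 + 4 * p * (6 + 4 * q) / 2 by ring_nf; omega]
  exact (progression_add_subset _ _ _ _).trans
    (Set.union_subset_union_left _ (progression_add_subset _ _ _ _))

theorem triples (T : List (ℕ × ℕ)) : HasZeroSumArray 3 (2 * T.length) (tripleValues T) := by
  induction T with
  | nil => exact (zero_right 3).mono (by simp [tripleValues])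
  | cons p T ih =>
    rw [← List.singleton_append, tripleValues_append, List.length_append, mul_add]
    exact (three_two p.1 p.2).hcat ih

theorem triples_beside_even (T : List (ℕ × ℕ)) {w : ℕ} (hw : Even w)
    (h : 4 ∣ 2 * T.length ∨ 4 ∣ w) (c : ℕ) :
    HasZeroSumArray (2 * T.length) (3 + w)
      (tripleValues T ∪ progression c 1 (T.length * w)) := by
  have block := even_even (even_two_mul T.length) hw h c 1
  rw [mul_assoc, Nat.mul_div_cancel_left _ two_pos] at block
  exact (triples T).transpose.hcat block

-- Block layout: `core` and `triples T₁` on top, the transpose of `triples T₂` and an even block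
-- below.
theorem odd_of_core {r w N : ℕ} {S : Set ℕ} (core : HasZeroSumArray 3 r S)
    {T₁ T₂ : List (ℕ × ℕ)} (hcover : Set.Iio N ⊆ S ∪ tripleValues (T₁ ++ T₂))
    (hr : r + 2 * T₁.length = 3 + w) (hw : Even w) (h : 4 ∣ 2 * T₂.length ∨ 4 ∣ w) :
    HasZeroSumArray (3 + 2 * T₂.length) (3 + w) (Set.Iio (N + T₂.length * w)) := by
  have top := core.hcat (triples T₁)
  rw [hr] at top
  refine (top.vcat (triples_beside_even T₂ hw h N)).mono fun x (hx : x < _) => ?_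
  rcases lt_or_ge x N with hxN | hxN
  · rw [tripleValues_append] at hcover
    grind [hcover hxN]
  · exact Or.inr (Or.inr ⟨x - N, by omega, by omega⟩)
end HasZeroSumArray

/-- The partner `b` of `d` in a family of triples `(d, b, d + b)`, `d ≤ k`, partitioning
`{0, …, 3 * k + 1}` (for `d = 0` the last two values coincide). The pairs `(b, d + b)` are nested
symmetrically about `(3 * k + 2) / 2` if `d` and `k` have the same parity, and about
`(5 * k + 3) / 2` otherwise; both divisions are exact. -/
def nestPartner (k d : ℕ) : ℕ :=
  if d % 2 = k % 2 then (3 * k + 2 - d) / 2 else (5 * k + 3 - d) / 2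

/-- The triples of the nested family with smallest values `D`. -/
def nestTriples (k : ℕ) (D : List ℕ) : List (ℕ × ℕ) := D.map fun d => (d, nestPartner k d)

theorem nestTriples_append (k : ℕ) (D D' : List ℕ) :
    nestTriples k (D ++ D') = nestTriples k D ++ nestTriples k D' :=
  List.map_append

theorem Iio_subset_tripleValues_nestTriples {k : ℕ} {D : List ℕ} (hD : ∀ d ≤ k, d ∈ D) :
    Set.Iio (3 * k + 2) ⊆ tripleValues (nestTriples k D) := by
  intro x (hx : x < 3 * k + 2)
  obtain ⟨d, hd, hxd⟩ :
      ∃ d ≤ k, x = d ∨ x = nestPartner k d ∨ x = d + nestPartner k d := by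
    rcases le_or_gt x k with hxk | hxk
    · exact ⟨x, hxk, Or.inl rfl⟩
    unfold nestPartner
    rcases le_or_gt x (2 * k + 1) with hxk' | hxk'
    · exact ⟨2 * x - (3 * k + 2) + (3 * k + 2 - 2 * x), by omega, by grind⟩
    · exact ⟨2 * x - (5 * k + 3) + (5 * k + 3 - 2 * x), by omega, by grind⟩
  exact ⟨_, List.mem_map_of_mem (hD d hd), hxd⟩

theorem Iio_subset_core_union_nestTriples {k : ℕ} (hk : k % 2 = 1) (hk3 : 3 ≤ k) :
    Set.Iio (3 * k + 4) ⊆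
      tripleValues [(0, 2 * 1 + nestPartner k 2), (1, nestPartner k 2)] ∪
        {2, nestPartner k 1, nestPartner k 1 + 1, 3 * k + 2, 3 * k + 2 + 1} ∪
        tripleValues (nestTriples k (List.range' 3 (k - 2))) := by
  intro x (hx : x < 3 * k + 4)
  rcases lt_or_ge x (3 * k + 2) with hxk | hxk
  · have hcover := Iio_subset_tripleValues_nestTriples (k := k)
      (D := [0, 1, 2] ++ List.range' 3 (k - 2)) (by simp; omega) hxk
    rw [nestTriples_append, tripleValues_append] at hcover
    refine hcover.imp_left ?_
    simp [nestTriples, nestPartner, tripleValues]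
    grind
  · obtain rfl | rfl : x = 3 * k + 2 ∨ x = 3 * k + 2 + 1 := by omega
    all_goals simp

namespace HasZeroSumArray

theorem exists_core (k : ℕ) (hk : 1 ≤ k) : ∃ r S T, HasZeroSumArray 3 r S ∧ Odd r ∧ r ≤ k + 3 ∧
    r + 2 * T.length = 2 * k + 1 ∧ Set.Iio (3 * k + 2) ⊆ S ∪ tripleValues T := by
  rcases le_or_gt 6 k with hk6 | hk6
  · refine ⟨7, _, nestTriples k ([1, 3, 5] ++ List.range' 7 (k - 6)),
      three_seven (nestPartner k 6), by decide, by omega, by simp [nestTriples]; omega, ?_⟩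
    have := Iio_subset_tripleValues_nestTriples (k := k)
      (D := [0, 2, 4, 6] ++ ([1, 3, 5] ++ List.range' 7 (k - 6)))
      (by simp; omega)
    rw [nestTriples_append, tripleValues_append] at this
    convert this using 3
    simp [nestTriples, nestPartner]
    grind
  interval_cases k
  · refine ⟨3, _, [], three_three 1 2, by decide, by simp, by simp, ?_⟩
    intro x (hx : x < 5)
    interval_cases x <;> simp [tripleValues]
  · exact ⟨5, _, [], three_five, by decide, by simp, by simp, by simp⟩
  · refine ⟨3, _, [(4, 6), (1, 8)], three_three 2 3, by decide, by simp, by simp, ?_⟩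
    intro x (hx : x < 11)
    interval_cases x <;> simp [tripleValues]
  · refine ⟨3, _, [(6, 7), (2, 10), (3, 8)], three_three 4 1, by decide, by simp, by simp, ?_⟩
    intro x (hx : x < 14)
    interval_cases x <;> simp [tripleValues]
  · refine ⟨3, _, [(7, 9), (5, 10), (3, 11), (1, 12)], three_three 2 4, by decide, by simp,
      by simp, ?_⟩
    intro x (hx : x < 17)
    interval_cases x <;> simp [tripleValues]

theorem of_mod_four_eq_three {m n : ℕ} (hm : Odd m) (hn : Odd n) (hm3 : 3 ≤ m) (hmn : m ≤ n)
    (h : m % 4 = 3 ∨ n % 4 = 3) : HasZeroSumArray m n {x | 2 * x < m * n} := by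
  obtain ⟨q, rfl⟩ : ∃ q, m = 3 + 2 * q := ⟨(m - 3) / 2, by grind⟩
  obtain ⟨v, rfl⟩ : ∃ v, n = 3 + 2 * v := ⟨(n - 3) / 2, by grind⟩
  obtain ⟨_, S, T, core, ⟨t, rfl⟩, hrk, hlength, hcover⟩ := exists_core (q + v + 1) (by omega)
  obtain ⟨p, hp⟩ : ∃ p, 2 * t + 1 + 2 * p = 3 + 2 * v := ⟨v + 1 - t, by omega⟩
  have hdrop : (T.drop p).length = q := by rw [List.length_drop]; omega
  have htake : (T.take p).length = p := by rw [List.length_take]; omega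
  rw [← List.take_append_drop p T] at hcover
  have := odd_of_core core hcover (w := 2 * v) (by omega) (even_two_mul v) (by omega)
  rw [hdrop] at this
  exact this.mono fun x hx => by grind

-- Below a core of three rows, the even block would have both sides `2` modulo `4`, where
-- `even_even` does not apply. A band of two more rows, started by `two_five`, makes its height
-- divisible by `4`.
theorem of_mod_four_eq_one {m n : ℕ} (hm : m % 4 = 1) (hn : n % 4 = 1) (hm3 : 3 ≤ m)
    (hn3 : 3 ≤ n) : HasZeroSumArray m n {x | 2 * x < m * n} := by
  obtain ⟨q, rfl⟩ : ∃ q, m = 5 + 4 * q := ⟨m / 4 - 1, by omega⟩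
  obtain ⟨p, rfl⟩ : ∃ p, n = 5 + 4 * p := ⟨n / 4 - 1, by omega⟩
  obtain ⟨k, hk⟩ : ∃ k, k = 3 + 2 * q + 2 * p := ⟨_, rfl⟩
  set T := nestTriples k (List.range' 3 (k - 2))
  have hlength : T.length = k - 2 := by simp [T, nestTriples]
  have hT : tripleValues T =
      tripleValues (T.take (1 + 2 * p)) ∪ tripleValues (T.drop (1 + 2 * p)) := by
    rw [← tripleValues_append, List.take_append_drop]
  have hdrop : (T.drop (1 + 2 * p)).length = 2 * q := by rw [List.length_drop]; omega
  have htake : (T.take (1 + 2 * p)).length = 1 + 2 * p := by rw [List.length_take]; omega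
  have top := (three_three 1 (nestPartner k 2)).hcat (triples (T.take (1 + 2 * p)))
  have middle := (two_five (nestPartner k 1) (3 * k + 2)).hcat
    (even_four 1 p (3 * k + 4) 1)
  have bottom := triples_beside_even (T.drop (1 + 2 * p)) (w := 2 + 4 * p) (by grind)
    (by omega) (3 * k + 4 + 4 * p)
  rw [htake, show 3 + 2 * (1 + 2 * p) = 5 + 4 * p by ring] at top
  rw [hdrop, show 2 * (2 * q) = 4 * q by ring, show 3 + (2 + 4 * p) = 5 + 4 * p by ring] at bottom
  refine ((top.vcat middle).vcat bottom).mono fun x (hx : 2 * x < _) => ?_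
  rcases lt_or_ge x (3 * k + 4) with hxk | hxk
  · have := Iio_subset_core_union_nestTriples (k := k) (by omega) (by omega) hxk
    grind
  rcases lt_or_ge x (3 * k + 4 + 4 * p) with hxp | hxp
  · exact Or.inl (Or.inr (Or.inr ⟨x - (3 * k + 4), by omega, by omega⟩))
  · exact Or.inr (Or.inr ⟨x - (3 * k + 4 + 4 * p), by grind, by omega⟩)

theorem of_mod_two_eq {m n : ℕ} (hm : 2 ≤ m) (hn : 2 ≤ n) (hpar : m % 2 = n % 2)
    (h : (m, n) ≠ (2, 2)) : HasZeroSumArray m n {x | x < m * n ∧ (x + m * n) % 2 = 1} := by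
  wlog hmn : m ≤ n generalizing m n
  · simpa only [mul_comm] using (this hn hm hpar.symm (by grind) (by omega)).transpose
  rcases Nat.even_or_odd m with hme | hmo
  · have hne : Even n := by grind
    have hmn2 := hme.mul_right n
    refine (odd_of_even hme hne hm (by grind)).mono fun x ⟨hx, hx2⟩ => ⟨x / 2, ?_, ?_⟩ <;> grind
  · have hno : Odd n := by grind
    have half : HasZeroSumArray m n {x | 2 * x < m * n} := by
      by_cases h3 : m % 4 = 3 ∨ n % 4 = 3
      · exact of_mod_four_eq_three hmo hno (by grind) hmn h3
      · exact of_mod_four_eq_one (by grind) (by grind) (by grind) (by grind)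
    have hmn2 := hmo.mul hno
    refine (half.image_mul 2).mono fun x ⟨hx, hx2⟩ => ⟨x / 2, ?_, ?_⟩ <;> grind

end HasZeroSumArray

/-- A magic rectangle: the entries are `1, …, |ι| * |κ|`, each once, all rows have the same sum
and all columns have the same sum. The sums are doubled to avoid halving. -/
structure IsMagicRectangle {ι κ : Type*} [Fintype ι] [Fintype κ] (L : ι → κ → ℕ) : Prop where
  bijOn : Set.BijOn (Function.uncurry L) Set.univ
    (Set.Icc 1 (Fintype.card ι * Fintype.card κ))
  two_mul_row_sum : ∀ i,
    2 * ∑ j, L i j = Fintype.card κ * (Fintype.card ι * Fintype.card κ + 1)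
  two_mul_col_sum : ∀ j,
    2 * ∑ i, L i j = Fintype.card ι * (Fintype.card ι * Fintype.card κ + 1)

theorem HasZeroSumArray.exists_equiv {m n : ℕ}
    (h : HasZeroSumArray m n {x | x < m * n ∧ (x + m * n) % 2 = 1}) :
    ∃ e : Fin m × Fin n ≃ Fin (m * n),
      (∀ i, ∑ j, (2 * (e (i, j) : ℤ) + 1 - (m * n : ℕ)) = 0) ∧
        ∀ j, ∑ i, (2 * (e (i, j) : ℤ) + 1 - (m * n : ℕ)) = 0 := by
  obtain ⟨M, hrow, hcol, hM⟩ := h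
  have hval (y : Fin (m * n)) :
      ∃ p : Fin m × Fin n, M p.1 p.2 = 2 * (y : ℤ) + 1 - (m * n : ℕ) := by
    rcases le_total (m * n) (2 * y + 1) with hy | hy
    · obtain ⟨⟨i, j, hij⟩, -⟩ := hM (2 * y + 1 - m * n) ⟨by omega, by omega⟩
      exact ⟨(i, j), by rw [hij]; push_cast [hy]; ring⟩
    · obtain ⟨-, i, j, hij⟩ := hM (m * n - (2 * y + 1)) ⟨by omega, by omega⟩
      exact ⟨(i, j), by rw [hij]; push_cast [hy]; ring⟩
  choose pos hpos using hval
  have hinj : Function.Injective pos := fun y y' hy => by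
    have := hpos y
    rw [hy, hpos] at this
    omega
  have hbij := (Fintype.bijective_iff_injective_and_card pos).2 ⟨hinj, by simp⟩
  have hM' (i j) :
      2 * ((Equiv.ofBijective pos hbij).symm (i, j) : ℤ) + 1 - (m * n : ℕ) = M i j := by
    rw [← hpos, Equiv.ofBijective_apply_symm_apply pos hbij]
  exact ⟨(Equiv.ofBijective pos hbij).symm, by simpa only [hM'], by simpa only [hM']⟩

theorem two_mul_sum_add_one_eq {κ : Type*} [Fintype κ] {f : κ → ℕ} {N : ℕ}
    (h : ∑ j, (2 * (f j : ℤ) + 1 - N) = 0) :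
    2 * ∑ j, (f j + 1) = Fintype.card κ * (N + 1) := by
  simp only [Finset.sum_sub_distrib, Finset.sum_add_distrib, ← Finset.mul_sum, Finset.sum_const,
    Finset.card_univ, nsmul_eq_mul] at h
  zify
  simp only [Finset.sum_add_distrib, Finset.sum_const, Finset.card_univ, nsmul_eq_mul]
  linarith

theorem exists_isMagicRectangle (ι κ : Type*) [Fintype ι] [Fintype κ] (hι : 2 ≤ Fintype.card ι)
    (hκ : 2 ≤ Fintype.card κ) (hpar : Fintype.card ι % 2 = Fintype.card κ % 2)
    (h : (Fintype.card ι, Fintype.card κ) ≠ (2, 2)) :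
    ∃ L : ι → κ → ℕ, IsMagicRectangle L := by
  obtain ⟨e, hrow, hcol⟩ := (HasZeroSumArray.of_mod_two_eq hι hκ hpar h).exists_equiv
  let a := Fintype.equivFin ι
  let b := Fintype.equivFin κ
  refine ⟨fun i j => e (a i, b j) + 1, ⟨fun p _ => ?_, ?_, ?_⟩, fun i => ?_, fun j => ?_⟩
  · simp [Function.uncurry]
  · rintro ⟨i, j⟩ - ⟨i', j'⟩ - hij
    simpa [Function.uncurry, Fin.val_inj] using hij
  · rintro x ⟨hx, hxN⟩
    obtain ⟨p, hp⟩ := e.surjective ⟨x - 1, by omega⟩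
    exact ⟨(a.symm p.1, b.symm p.2), trivial, by simp [Function.uncurry, hp]; omega⟩
  · exact two_mul_sum_add_one_eq
      (Equiv.sum_comp b (fun j => 2 * (e (a i, j) : ℤ) + 1 - _) ▸ hrow (a i))
  · exact two_mul_sum_add_one_eq
      (Equiv.sum_comp a (fun i => 2 * (e (i, b j) : ℤ) + 1 - _) ▸ hcol (b j))

section Join

variable {V : Type*} {G : SimpleGraph V} {n : ℕ}

theorem vertexSum_eq_finsum_neighborSet (G : SimpleGraph V) (f : Sym2 V → ℕ) (v : V) :
    vertexSum G f v = ∑ᶠ w ∈ G.neighborSet v, f s(v, w) := by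
  refine (finsum_mem_eq_of_bijOn (s(v, ·)) ⟨?_, ?_, ?_⟩ fun _ _ => rfl).symm
  · exact fun w hw => G.mk'_mem_incidenceSet_iff.2 ⟨hw, Or.inl rfl⟩
  · exact fun _ _ _ _ h => Sym2.congr_right.1 h
  · rintro e ⟨he, hv⟩
    obtain ⟨w, rfl⟩ := Sym2.mem_iff_exists.1 hv
    exact ⟨w, he, rfl⟩

theorem vertexSum_eq_sum_ite [Fintype V] (G : SimpleGraph V) [DecidableRel G.Adj]
    (f : Sym2 V → ℕ) (v : V) :
    vertexSum G f v = ∑ w, if G.Adj v w then f s(v, w) else 0 := by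
  rw [vertexSum_eq_finsum_neighborSet, ← Finset.sum_filter]
  apply finsum_mem_eq_sum_of_inter_support_eq
  simp [SimpleGraph.neighborSet]

theorem vertexSum_pos [Finite V] {f : Sym2 V → ℕ} (hf : ∀ e ∈ G.edgeSet, 0 < f e) {v : V}
    (hv : ¬ G.IsIsolated v) : 0 < vertexSum G f v := by
  classical
  have := Fintype.ofFinite V
  obtain ⟨w, hvw⟩ : ∃ w, G.Adj v w := by simpa [SimpleGraph.IsIsolated] using hv
  rw [vertexSum_eq_sum_ite]
  exact Finset.sum_pos' (fun _ _ => Nat.zero_le _)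
    ⟨w, Finset.mem_univ w, by simpa [hvw] using hf s(v, w) hvw⟩

@[simp]
theorem joinEmpty_adj_inl_inl {a b : V} :
    (joinEmpty G n).Adj (Sum.inl a) (Sum.inl b) ↔ G.Adj a b := by
  simpa [joinEmpty, G.adj_comm b a] using G.ne_of_adj

@[simp]
theorem joinEmpty_adj_inl_inr (a : V) (j : Fin n) :
    (joinEmpty G n).Adj (Sum.inl a) (Sum.inr j) := by
  simp [joinEmpty]

@[simp]
theorem joinEmpty_adj_inr_inl (a : V) (j : Fin n) :
    (joinEmpty G n).Adj (Sum.inr j) (Sum.inl a) :=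
  (joinEmpty_adj_inl_inr a j).symm

@[simp]
theorem not_joinEmpty_adj_inr_inr (i j : Fin n) :
    ¬ (joinEmpty G n).Adj (Sum.inr i) (Sum.inr j) := by
  simp [joinEmpty]

theorem edgeSet_joinEmpty (G : SimpleGraph V) (n : ℕ) :
    (joinEmpty G n).edgeSet = Sym2.map Sum.inl '' G.edgeSet ∪
      Set.range fun p : V × Fin n => s(Sum.inl p.1, Sum.inr p.2) := by
  ext e
  constructor
  · induction e with
    | _ x y =>
      rcases x with a | i <;> rcases y with b | j <;> intro h
      · exact Or.inl ⟨s(a, b), joinEmpty_adj_inl_inl.1 h, rfl⟩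
      · exact Or.inr ⟨(a, j), rfl⟩
      · exact Or.inr ⟨(b, i), Sym2.eq_swap⟩
      · exact absurd h (not_joinEmpty_adj_inr_inr i j)
  · rintro (⟨e, he, rfl⟩ | ⟨p, rfl⟩)
    · induction e with
      | _ a b => exact joinEmpty_adj_inl_inl.2 he
    · exact joinEmpty_adj_inl_inr p.1 p.2

/-- The labeling of the edges of `joinEmpty G n` by `f` on `G` and by `g a j` on the new edge
between `a` and `j`. Its value `0` on pairs of new vertices is irrelevant. -/
def joinLabel (f : Sym2 V → ℕ) (g : V → Fin n → ℕ) : Sym2 (V ⊕ Fin n) → ℕ :=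
  Sym2.lift ⟨fun x y => match x, y with
    | Sum.inl a, Sum.inl b => f s(a, b)
    | Sum.inl a, Sum.inr j => g a j
    | Sum.inr j, Sum.inl a => g a j
    | Sum.inr _, Sum.inr _ => 0, by
      rintro (a | i) (b | j)
      exacts [congrArg f Sym2.eq_swap, rfl, rfl, rfl]⟩

@[simp]
theorem joinLabel_map_inl (f : Sym2 V → ℕ) (g : V → Fin n → ℕ) (e : Sym2 V) :
    joinLabel f g (e.map Sum.inl) = f e := by
  induction e with
  | _ a b => rfl

@[simp]
theorem joinLabel_inl_inr (f : Sym2 V → ℕ) (g : V → Fin n → ℕ) (a : V) (j : Fin n) :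
    joinLabel f g s(Sum.inl a, Sum.inr j) = g a j :=
  rfl

theorem bijOn_joinLabel {f : Sym2 V → ℕ} {g : V → Fin n → ℕ} {S T : Set ℕ}
    (hf : Set.BijOn f G.edgeSet S) (hg : Set.BijOn (Function.uncurry g) Set.univ T)
    (hST : Disjoint S T) : Set.BijOn (joinLabel f g) (joinEmpty G n).edgeSet (S ∪ T) := by
  have hne {e} (he : e ∈ G.edgeSet) (p : V × Fin n) : f e ≠ g p.1 p.2 :=
    hST.ne_of_mem (hf.mapsTo he) (hg.mapsTo (Set.mem_univ p))
  rw [edgeSet_joinEmpty]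
  refine ⟨?_, ?_, ?_⟩
  · rintro _ (⟨e, he, rfl⟩ | ⟨p, rfl⟩)
    · simpa using Or.inl (hf.mapsTo he)
    · exact Or.inr (hg.mapsTo (Set.mem_univ p))
  · rintro _ (⟨e, he, rfl⟩ | ⟨p, rfl⟩) _ (⟨e', he', rfl⟩ | ⟨p', rfl⟩) h <;>
      simp only [joinLabel_map_inl, joinLabel_inl_inr] at h
    · rw [hf.injOn he he' h]
    · exact absurd h (hne he p')
    · exact absurd h.symm (hne he' p)
    · rw [hg.injOn (Set.mem_univ p) (Set.mem_univ p') h]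
  · rintro _ (hx | hx)
    · obtain ⟨e, he, rfl⟩ := hf.surjOn hx
      exact ⟨_, Or.inl ⟨e, he, rfl⟩, joinLabel_map_inl f g e⟩
    · obtain ⟨p, -, rfl⟩ := hg.surjOn hx
      exact ⟨_, Or.inr ⟨p, rfl⟩, rfl⟩

theorem vertexSum_joinLabel_inl [Finite V] (G : SimpleGraph V) (f : Sym2 V → ℕ)
    (g : V → Fin n → ℕ) (a : V) :
    vertexSum (joinEmpty G n) (joinLabel f g) (Sum.inl a) = vertexSum G f a + ∑ j, g a j := by
  classical
  have := Fintype.ofFinite V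
  simp only [vertexSum_eq_sum_ite, Fintype.sum_sum_type, joinEmpty_adj_inl_inl,
    joinEmpty_adj_inl_inr, if_true, joinLabel_inl_inr]
  rfl

theorem vertexSum_joinLabel_inr [Fintype V] (G : SimpleGraph V) (f : Sym2 V → ℕ)
    (g : V → Fin n → ℕ) (j : Fin n) :
    vertexSum (joinEmpty G n) (joinLabel f g) (Sum.inr j) = ∑ a, g a j := by
  classical
  simp only [vertexSum_eq_sum_ite, Fintype.sum_sum_type, joinEmpty_adj_inr_inl,
    not_joinEmpty_adj_inr_inr, if_true, if_false, Finset.sum_const_zero, add_zero, Sym2.eq_swap,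
    joinLabel_inl_inr]

theorem colorCount_joinEmpty_eq_add_one [Finite V] (hn : 0 < n) {f : Sym2 V → ℕ}
    {F : Sym2 (V ⊕ Fin n) → ℕ} {r c : ℕ}
    (hl : ∀ a, vertexSum (joinEmpty G n) F (Sum.inl a) = vertexSum G f a + r)
    (hr : ∀ j, vertexSum (joinEmpty G n) F (Sum.inr j) = c)
    (hne : ∀ a, vertexSum G f a + r ≠ c) :
    colorCount (joinEmpty G n) F = colorCount G f + 1 := by
  have : Nonempty (Fin n) := ⟨⟨0, hn⟩⟩
  have hrange : Set.range (vertexSum (joinEmpty G n) F) =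
      insert c ((· + r) '' Set.range (vertexSum G f)) := by
    rw [← Set.range_comp, Set.insert_eq, Set.union_comm, ← Set.range_const (ι := Fin n),
      ← Set.Sum.elim_range]
    congr 1
    ext (a | j)
    exacts [hl a, hr j]
  have hc : c ∉ (· + r) '' Set.range (vertexSum G f) := by
    rintro ⟨_, ⟨a, rfl⟩, h⟩
    exact hne a h
  rw [colorCount, hrange, Set.ncard_insert_of_notMem hc ((Set.finite_range _).image _),
    Set.ncard_image_of_injective _ (add_left_injective r), colorCount]

theorem isLocalAntimagic_joinLabel [Fintype V] {f : Sym2 V → ℕ} (hf : IsLocalAntimagic G f)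
    {g : V → Fin n → ℕ} {N r c : ℕ} (hg : Set.BijOn (Function.uncurry g) Set.univ
      (Set.Icc (G.edgeSet.ncard + 1) (G.edgeSet.ncard + N)))
    (hr : ∀ a, ∑ j, g a j = r) (hc : ∀ j, ∑ a, g a j = c)
    (hne : ∀ a, vertexSum G f a + r ≠ c) :
    IsLocalAntimagic (joinEmpty G n) (joinLabel f g) := by
  have hunion : Set.Icc 1 G.edgeSet.ncard ∪
      Set.Icc (G.edgeSet.ncard + 1) (G.edgeSet.ncard + N) =
        Set.Icc 1 (G.edgeSet.ncard + N) := by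
    ext x
    simp only [Set.mem_union, Set.mem_Icc]
    omega
  have hbij : Set.BijOn (joinLabel f g) (joinEmpty G n).edgeSet
      (Set.Icc 1 (G.edgeSet.ncard + N)) :=
    hunion ▸ bijOn_joinLabel hf.1 hg
      (Set.disjoint_left.2 fun x hx hx' => (Nat.lt_of_succ_le hx'.1).not_ge hx.2)
  have hcard : (joinEmpty G n).edgeSet.ncard = G.edgeSet.ncard + N := by
    rw [← hbij.injOn.ncard_image, hbij.image_eq, ← Finset.coe_Icc, Set.ncard_coe_finset,
      Nat.card_Icc, Nat.add_sub_cancel]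
  refine ⟨hcard ▸ hbij, ?_⟩
  rintro (a | i) (b | j) h <;>
    simp only [vertexSum_joinLabel_inl, vertexSum_joinLabel_inr, hr, hc]
  · simpa only [ne_eq, add_left_inj] using hf.2 a b (joinEmpty_adj_inl_inl.1 h)
  · exact hne a
  · exact (hne b).symm
  · exact absurd h (not_joinEmpty_adj_inr_inr i j)

theorem bijOn_uncurry_const_add [Fintype V] {L : V → Fin n → ℕ} (hL : IsMagicRectangle L)
    (e : ℕ) :
    Set.BijOn (Function.uncurry fun a j => e + L a j) Set.univ
      (Set.Icc (e + 1) (e + Fintype.card V * n)) := by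
  have hadd : Set.BijOn (e + ·) (Set.Icc 1 (Fintype.card V * n))
      (Set.Icc (e + 1) (e + Fintype.card V * n)) := by
    simpa using (add_right_injective e).injOn.bijOn_image (s := Set.Icc 1 (Fintype.card V * n))
  have hbij := hL.bijOn
  rw [Fintype.card_fin] at hbij
  exact hadd.comp hbij

theorem exists_isLocalAntimagic_joinEmpty [Fintype V] (hV : 2 ≤ Fintype.card V) (hn : 3 ≤ n)
    (hpar : Fintype.card V % 2 = n % 2) (hVn : Fintype.card V ≤ n)
    (hisol : Fintype.card V = n → ∀ v, ¬ G.IsIsolated v)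
    {f : Sym2 V → ℕ} (hf : IsLocalAntimagic G f) :
    ∃ F, IsLocalAntimagic (joinEmpty G n) F ∧
      colorCount (joinEmpty G n) F = colorCount G f + 1 := by
  obtain ⟨L, hL⟩ := exists_isMagicRectangle V (Fin n) hV (by simp; omega) (by simpa using hpar)
    (by simp; omega)
  have hrow := hL.two_mul_row_sum
  have hcol := hL.two_mul_col_sum
  rw [Fintype.card_fin] at hrow hcol
  set m := Fintype.card V
  set e := G.edgeSet.ncard
  have hr (a) : ∑ j, (e + L a j) = n * e + n * (m * n + 1) / 2 := by
    rw [Finset.sum_add_distrib, Finset.sum_const, Finset.card_univ, Fintype.card_fin, smul_eq_mul,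
      ← hrow a, Nat.mul_div_cancel_left _ two_pos]
  have hc (j) : ∑ a, (e + L a j) = m * e + m * (m * n + 1) / 2 := by
    rw [Finset.sum_add_distrib, Finset.sum_const, Finset.card_univ, smul_eq_mul, ← hcol j,
      Nat.mul_div_cancel_left _ two_pos]
  have hlt (a) : m * e + m * (m * n + 1) / 2 <
      vertexSum G f a + (n * e + n * (m * n + 1) / 2) := by
    rcases hVn.eq_or_lt with h | h
    · have := vertexSum_pos (fun _ he => (hf.1.mapsTo he).1) (hisol h a)
      rw [h]
      omega
    · have he : m * e ≤ n * e := Nat.mul_le_mul_right e hVn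
      have hN : (m + 1) * (m * n + 1) ≤ n * (m * n + 1) := Nat.mul_le_mul_right _ h
      have hmn : 0 < m * n := by positivity
      rw [add_one_mul] at hN
      omega
  exact ⟨_, isLocalAntimagic_joinLabel hf (bijOn_uncurry_const_add hL e) hr hc
      fun a => (hlt a).ne', colorCount_joinEmpty_eq_add_one (by omega)
      (fun a => by rw [vertexSum_joinLabel_inl, hr]) (fun j => by rw [vertexSum_joinLabel_inr, hc])
      fun a => (hlt a).ne'⟩

theorem colorable_colorCount_joinEmpty_sub_one [Finite V] (hn : 0 < n) {F : Sym2 (V ⊕ Fin n) → ℕ}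
    (hF : IsLocalAntimagic (joinEmpty G n) F) :
    G.Colorable (colorCount (joinEmpty G n) F - 1) := by
  set σ := vertexSum (joinEmpty G n) F
  set c := σ (Sum.inr ⟨0, hn⟩)
  let col : G.Coloring ↑(Set.range σ \ {c}) := SimpleGraph.Coloring.mk
    (fun a => ⟨σ (Sum.inl a), ⟨_, rfl⟩, hF.2 _ _ (joinEmpty_adj_inl_inr a _)⟩)
    fun hab h => hF.2 _ _ (joinEmpty_adj_inl_inl.2 hab) (congrArg Subtype.val h)
  have := Fintype.ofFinite ↑(Set.range σ \ {c})
  have hcol := col.colorable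
  rwa [← Nat.card_eq_fintype_card, Nat.card_coe_set_eq,
    Set.ncard_sdiff_singleton_of_mem (Set.mem_range_self _)] at hcol

end Join

section ChiLA

variable {V : Type*} {G : SimpleGraph V}

theorem chiLA_le_colorCount {f : Sym2 V → ℕ} (hf : IsLocalAntimagic G f) :
    chiLA G ≤ colorCount G f :=
  Nat.sInf_le ⟨f, hf, rfl⟩

theorem exists_colorCount_eq_chiLA (h : ∃ f, IsLocalAntimagic G f) :
    ∃ f, IsLocalAntimagic G f ∧ colorCount G f = chiLA G :=
  let ⟨f, hf⟩ := h
  Nat.sInf_mem (s := {k | ∃ f, IsLocalAntimagic G f ∧ colorCount G f = k}) ⟨_, f, hf, rfl⟩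

theorem exists_isLocalAntimagic_of_chiLA_pos (h : 0 < chiLA G) : ∃ f, IsLocalAntimagic G f :=
  let ⟨_, f, hf, _⟩ := Nat.nonempty_of_pos_sInf h
  ⟨f, hf⟩

end ChiLA

theorem chiLA_join_eq_of_le_general {V : Type*} [Fintype V] (G : SimpleGraph V) (n : ℕ)
    (hV : 2 ≤ Fintype.card V) (hn : 3 ≤ n) (hpar : Fintype.card V % 2 = n % 2)
    (hisol : Fintype.card V = n → ∀ v, ¬ G.IsIsolated v)
    (hchi : G.chromaticNumber = (chiLA G : ℕ∞)) (hVn : Fintype.card V ≤ n) :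
    chiLA (joinEmpty G n) = chiLA G + 1 := by
  have : Nonempty V := Fintype.card_pos_iff.1 (by omega)
  have hpos : 0 < chiLA G := by
    exact_mod_cast hchi ▸ G.colorable_of_fintype.chromaticNumber_pos
  obtain ⟨f, hf, hfchi⟩ := exists_colorCount_eq_chiLA (exists_isLocalAntimagic_of_chiLA_pos hpos)
  obtain ⟨F, hF, hFf⟩ := exists_isLocalAntimagic_joinEmpty hV hn hpar hVn hisol hf
  obtain ⟨F', hF', hF'chi⟩ := exists_colorCount_eq_chiLA ⟨F, hF⟩
  have hupper := chiLA_le_colorCount hF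
  have hlower : chiLA G ≤ chiLA (joinEmpty G n) - 1 := by
    have := (colorable_colorCount_joinEmpty_sub_one (by omega) hF').chromaticNumber_le
    rw [hchi, hF'chi] at this
    exact_mod_cast this
  omega

theorem chiLA_join_eq_of_le {V : Type*} [Fintype V] (G : SimpleGraph V) (hG : G.Connected)
    (m n : ℕ) (hm : Fintype.card V = m) (hm3 : 3 ≤ m) (hn : 1 ≤ n)
    (hpar : m % 2 = n % 2) (hchi : G.chromaticNumber = (chiLA G : ℕ∞))
    (hnm : m ≤ n) :
    chiLA (joinEmpty G n) = chiLA G + 1 := by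
  have : Nontrivial V := Fintype.one_lt_card_iff_nontrivial.1 (by omega)
  exact chiLA_join_eq_of_le_general G n (by omega) (by omega) (hm ▸ hpar)
    (fun _ => hG.preconnected.not_isIsolated) hchi (hm ▸ hnm)
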